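/- Let n ≥ 2 be an integer, p ≥ n a real number, and let A : [0,∞) → ℝ satisfy conditions (i)–(iv) as in the context. Let P = {x₁, …, x_k} be a nonempty finite subset of ℝⁿ and let u : ℝⁿ → ℝ be continuous on ℝⁿ, continuously differentiable on ℝⁿ\P, bounded (from above and below), a weak solution of div(|∇u|^{p-2}A(|∇u|)∇u) = 0 in ℝⁿ\P, and satisfy u(x₁) = u(x₂) = … = u(x_k). Then u is constant on ℝⁿ. -/

import Mathlib

/-!
The idea is that for `p ≥ n` the space `ℝⁿ` has zero `p`-capacity at infinity, so that a
Caccioppoli inequality forces the gradient of a bounded solution to vanish.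

Let `c` be the common value of `u` on `P`. For `b > c` the function `s = max (u - b) 0` vanishes
near `P` by continuity of `u`, so for a cutoff `η` the function `η ^ p * s ^ 2` is `C¹` with compact
support in `ℝⁿ \ P`. Mollification (`exists_smooth_approx`, `weak_form_C1`) makes it an admissible
test function. As `s ^ 2` is `s / 2` times its own derivative in `u`, Young's inequality
(`rpow_sub_one_mul_le`, `energy_pointwise`) absorbs the mixed term and gives
`δ * ∫ η ^ p * s * |∇u| ^ p ≤ C * ∫ |∇η| ^ p`, where `C` depends only on `p`, `δ`, `L`, `b` and
the bound for `u`.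

Cutoffs equal to `1` on a given ball with `∫ |∇η| ^ p` arbitrarily small exist since `p ≥ n ≥ 2`
(`exists_cutoff`): average `k` dyadic dilates of one bump. Their gradients have disjoint supports
and each has `p`-energy at most that of the bump, so the average has energy `O(k ^ (1 - p))`.

Hence `∇u = 0` on `{u > b}` for all `b > c` (`gradient_eq_zero_of_gt`), and by symmetry on `{u < c}`.
So `u` is locally constant on the open set `{u ≠ c}`; if some value `u y ≠ c` were taken, the level
set `{u = u y}` would be open and closed, hence everything, contradicting `u = c` on `P ≠ ∅`.
-/

open Real MeasureTheory Set Filter Topology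
open scoped RealInnerProductSpace

/-! ### Extending the weak formulation to `C¹` test functions -/

/-- Mollification: a compactly supported `C¹` function is a limit, with uniform convergence of the
derivatives, of smooth functions supported in one fixed compact set `K ⊆ U`. -/
lemma exists_smooth_approx {n : ℕ} {U : Set (EuclideanSpace ℝ (Fin n))} (hU : IsOpen U)
    {ψ : EuclideanSpace ℝ (Fin n) → ℝ} (hψ : ContDiff ℝ 1 ψ) (hc : HasCompactSupport ψ)
    (hs : tsupport ψ ⊆ U) :
    ∃ K, IsCompact K ∧ K ⊆ U ∧ tsupport ψ ⊆ K ∧ ∀ ε > 0,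
      ∃ φ : EuclideanSpace ℝ (Fin n) → ℝ, ContDiff ℝ (⊤ : ℕ∞) φ ∧ tsupport φ ⊆ K ∧
        ∀ x, ‖fderiv ℝ φ x - fderiv ℝ ψ x‖ ≤ ε := by
  obtain ⟨r, hr, hrU⟩ := hc.isCompact.exists_cthickening_subset_open hU hs
  refine ⟨_, hc.isCompact.cthickening, hrU, Metric.self_subset_cthickening _, fun ε hε => ?_⟩
  have hcont : Continuous (fderiv ℝ ψ) := hψ.continuous_fderiv one_ne_zero
  have huc : UniformContinuous (fderiv ℝ ψ) :=
    (hc.fderiv ℝ).uniformContinuous_of_continuous hcont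
  obtain ⟨d, hd, hd'⟩ := Metric.uniformContinuous_iff.1 huc ε hε
  have hm : 0 < min r d := lt_min hr hd
  let B : ContDiffBump (0 : EuclideanSpace ℝ (Fin n)) :=
    ⟨min r d / 2, min r d, by positivity, by linarith⟩
  have hB : LocallyIntegrable (B.normed volume) volume := B.continuous_normed.locallyIntegrable
  refine ⟨convolution (B.normed volume) ψ (ContinuousLinearMap.lsmul ℝ ℝ) volume, ?_, ?_, ?_⟩
  · exact B.hasCompactSupport_normed.contDiff_convolution_left _ B.contDiff_normed
      hψ.continuous.locallyIntegrable
  · refine closure_minimal ?_ Metric.isClosed_cthickening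
    refine (support_convolution_subset _).trans ?_
    rintro _ ⟨a, ha, b, hb, rfl⟩
    rw [B.support_normed_eq, mem_ball_zero_iff] at ha
    refine Metric.mem_cthickening_of_dist_le _ b _ _ (subset_tsupport _ hb) ?_
    rw [dist_eq_norm]
    simpa using (ha.le.trans (min_le_left _ _))
  · intro x
    rw [(hc.hasFDerivAt_convolution_right _ hB hψ x).fderiv]
    have key := B.dist_normed_convolution_le (μ := volume) (g := fderiv ℝ ψ) (x₀ := x) (ε := ε)
      hcont.aestronglyMeasurable (fun y hy => (hd' (lt_of_lt_of_le hy (min_le_right _ _))).le)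
    rw [dist_eq_norm] at key
    exact key

lemma integrableOn_of_continuousOn_compact {n : ℕ} {U K : Set (EuclideanSpace ℝ (Fin n))}
    {f : EuclideanSpace ℝ (Fin n) → ℝ} (hK : IsCompact K) (hU : MeasurableSet U)
    (hf : ContinuousOn f K) (h0 : ∀ x ∈ U, x ∉ K → f x = 0) : IntegrableOn f U :=
  (hf.integrableOn_compact hK).of_forall_sdiff_eq_zero hU (fun x hx => h0 x hx.1 hx.2)

/-- A field `F`, continuous on `U`, which is weakly divergence free in `U` against smooth test
functions is so against `C¹` test functions. -/
lemma weak_form_C1 {n : ℕ} {U : Set (EuclideanSpace ℝ (Fin n))} (hU : IsOpen U)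
    {F : EuclideanSpace ℝ (Fin n) → EuclideanSpace ℝ (Fin n)} (hF : ContinuousOn F U)
    (hw : ∀ ψ : EuclideanSpace ℝ (Fin n) → ℝ, ContDiff ℝ (⊤ : ℕ∞) ψ → HasCompactSupport ψ →
      tsupport ψ ⊆ U → ∫ x in U, fderiv ℝ ψ x (F x) = 0)
    {ψ : EuclideanSpace ℝ (Fin n) → ℝ} (hψ : ContDiff ℝ 1 ψ) (hc : HasCompactSupport ψ)
    (hs : tsupport ψ ⊆ U) :
    ∫ x in U, fderiv ℝ ψ x (F x) = 0 := by
  obtain ⟨K, hK, hKU, hsK, happ⟩ := exists_smooth_approx hU hψ hc hs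
  have hint : ∀ φ : EuclideanSpace ℝ (Fin n) → ℝ, ContDiff ℝ 1 φ → tsupport φ ⊆ K →
      IntegrableOn (fun x => fderiv ℝ φ x (F x)) U := by
    intro φ hφ hφK
    refine integrableOn_of_continuousOn_compact hK hU.measurableSet
      ((hφ.continuous_fderiv one_ne_zero).continuousOn.clm_apply (hF.mono hKU)) ?_
    intro x _ hx
    rw [fderiv_of_notMem_tsupport ℝ (fun h => hx (hφK h))]
    simp
  have hFi : IntegrableOn (fun x => ‖F x‖) K := ((hF.mono hKU).norm).integrableOn_compact hK
  have hI : 0 ≤ ∫ x in K, ‖F x‖ := by positivity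
  have hbound : ∀ ε > 0, |∫ x in U, fderiv ℝ ψ x (F x)| ≤ ε * ∫ x in K, ‖F x‖ := by
    intro ε hε
    obtain ⟨φ, hφ, hφK, hclose⟩ := happ ε hε
    have h1 := hw φ hφ (HasCompactSupport.of_support_subset_isCompact hK
      ((subset_tsupport _).trans hφK)) (hφK.trans hKU)
    have hφ1 : ContDiff ℝ 1 φ := hφ.of_le (by exact_mod_cast le_top)
    have h2 : ∫ x in U, fderiv ℝ ψ x (F x)
        = ∫ x in U, (fderiv ℝ ψ x (F x) - fderiv ℝ φ x (F x)) := by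
      rw [integral_sub (hint ψ hψ hsK) (hint φ hφ1 hφK), h1, sub_zero]
    have h3 : ∫ x in U, (fderiv ℝ ψ x (F x) - fderiv ℝ φ x (F x))
        = ∫ x in K, (fderiv ℝ ψ x (F x) - fderiv ℝ φ x (F x)) := by
      refine setIntegral_eq_of_subset_of_forall_sdiff_eq_zero hU.measurableSet hKU ?_
      intro x hx
      rw [fderiv_of_notMem_tsupport ℝ (fun h => hx.2 (hφK h)),
        fderiv_of_notMem_tsupport ℝ (fun h => hx.2 (hsK h))]
      simp
    rw [h2, h3, ← integral_const_mul, ← Real.norm_eq_abs]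
    refine norm_integral_le_of_norm_le (hFi.const_mul ε) (ae_of_all _ fun x => ?_)
    rw [← sub_apply]
    refine (ContinuousLinearMap.le_opNorm _ _).trans ?_
    gcongr
    rw [norm_sub_rev]
    exact hclose x
  by_contra hne
  have hpos := abs_pos.2 hne
  have := hbound (|∫ x in U, fderiv ℝ ψ x (F x)| / (2 * ((∫ x in K, ‖F x‖) + 1))) (by positivity)
  rw [div_mul_eq_mul_div, le_div_iff₀ (by positivity)] at this
  nlinarith

/-! ### Cutoff functions of small `p`-energy -/

/-- If at most one of the vectors `v i` is nonzero, the `p`-th power of the norm is subadditive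
without a constant. -/
lemma norm_sum_rpow_le {ι V : Type*} [NormedAddCommGroup V] (s : Finset ι) (v : ι → V)
    {p : ℝ} (hp : 0 < p)
    (hd : ∀ i ∈ s, ∀ j ∈ s, v i ≠ 0 → v j ≠ 0 → i = j) :
    ‖∑ i ∈ s, v i‖ ^ p ≤ ∑ i ∈ s, ‖v i‖ ^ p := by
  by_cases h : ∃ i ∈ s, v i ≠ 0
  · obtain ⟨i, hi, hvi⟩ := h
    rw [Finset.sum_eq_single_of_mem i hi
      (fun j hj hji => by_contra fun hvj => hji (hd j hj i hi hvj hvi))]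
    exact Finset.single_le_sum (f := fun i => ‖v i‖ ^ p) (fun j _ => by positivity) hi
  · push Not at h
    rw [Finset.sum_eq_zero h, norm_zero, zero_rpow hp.ne']
    exact Finset.sum_nonneg fun j _ => by positivity

/-- Zero `p`-capacity at infinity of `ℝⁿ` for `p ≥ n ≥ 2`. -/
lemma exists_cutoff {n : ℕ} (hn : 2 ≤ n) {p : ℝ} (hp : (n : ℝ) ≤ p) (R : ℝ) {ε : ℝ} (hε : 0 < ε) :
    ∃ η : EuclideanSpace ℝ (Fin n) → ℝ, ContDiff ℝ 1 η ∧ HasCompactSupport η ∧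
      (∀ x, 0 ≤ η x) ∧ (∀ x, ‖x‖ ≤ R → η x = 1) ∧
      Integrable (fun x => ‖fderiv ℝ η x‖ ^ p) ∧ ∫ x, ‖fderiv ℝ η x‖ ^ p ≤ ε := by
  have hn' : (2 : ℝ) ≤ n := by exact_mod_cast hn
  have hp0 : 0 < p := by linarith
  -- The radii satisfy `3 < 2 * 2`, so that the dyadic dilates have disjoint gradient supports.
  let χ : ContDiffBump (0 : EuclideanSpace ℝ (Fin n)) := ⟨2, 3, by norm_num, by norm_num⟩
  have hχ : ContDiff ℝ 1 χ := χ.contDiff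
  have hχd : Differentiable ℝ χ := hχ.differentiable one_ne_zero
  set C := ∫ x, ‖fderiv ℝ χ x‖ ^ p with hC
  have hC0 : 0 ≤ C := by positivity
  obtain ⟨m, hm⟩ := pow_unbounded_of_one_lt R (one_lt_two)
  obtain ⟨k, hk⟩ := exists_nat_gt (C / ε)
  have hk0 : (0 : ℝ) < k := lt_of_le_of_lt (by positivity) hk
  have hk1 : (1 : ℝ) ≤ k := by exact_mod_cast (by exact_mod_cast hk0 : 0 < k)
  let f : ℕ → EuclideanSpace ℝ (Fin n) → ℝ := fun j x => χ (((2 : ℝ) ^ j)⁻¹ • x)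
  have hf : ∀ j, ContDiff ℝ 1 (f j) := fun j => hχ.comp (contDiff_const_smul _)
  have hfc : ∀ j, HasCompactSupport (f j) := fun j =>
    χ.hasCompactSupport.comp_smul (by positivity)
  have hfd : ∀ j x, fderiv ℝ (f j) x = ((2 : ℝ) ^ j)⁻¹ • fderiv ℝ χ (((2 : ℝ) ^ j)⁻¹ • x) := by
    intro j x
    exact fderiv_comp_smul _
  have hnorm : ∀ j (x : EuclideanSpace ℝ (Fin n)), ‖((2 : ℝ) ^ j)⁻¹ • x‖ = ‖x‖ / 2 ^ j := by
    intro j x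
    rw [norm_smul, norm_inv, norm_pow, Real.norm_ofNat, inv_mul_eq_div]
  have hsupp : ∀ j x, fderiv ℝ (f j) x ≠ 0 → 2 * 2 ^ j ≤ ‖x‖ ∧ ‖x‖ ≤ 3 * 2 ^ j := by
    intro j x hx
    rw [hfd] at hx
    have hx' : fderiv ℝ χ (((2 : ℝ) ^ j)⁻¹ • x) ≠ 0 := fun h => hx (by rw [h, smul_zero])
    have h2 : (0 : ℝ) < 2 ^ j := by positivity
    constructor
    · by_contra! hlt
      apply hx'
      have : χ =ᶠ[𝓝 (((2 : ℝ) ^ j)⁻¹ • x)] 1 := by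
        apply χ.eventuallyEq_one_of_mem_ball
        rw [mem_ball_zero_iff, hnorm, div_lt_iff₀ h2]
        exact hlt
      rw [this.fderiv_eq]
      exact fderiv_const_apply 1
    · by_contra! hlt
      apply hx'
      apply fderiv_of_notMem_tsupport
      rw [χ.tsupport_eq, mem_closedBall_zero_iff, hnorm, div_le_iff₀ h2]
      exact not_le.2 hlt
  have hdisj : ∀ x i j, fderiv ℝ (f i) x ≠ 0 → fderiv ℝ (f j) x ≠ 0 → i = j := by
    have key : ∀ x i j, fderiv ℝ (f i) x ≠ 0 → fderiv ℝ (f j) x ≠ 0 → ¬ i < j := by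
      intro x i j hi hj hij
      have h1 := (hsupp i x hi).2
      have h2 := (hsupp j x hj).1
      have h3 : (2 : ℝ) ^ (i + 1) ≤ 2 ^ j := pow_le_pow_right₀ one_le_two hij
      have h4 : (0 : ℝ) < 2 ^ i := by positivity
      rw [pow_succ] at h3
      linarith
    intro x i j hi hj
    exact le_antisymm (not_lt.1 (key x j i hj hi)) (not_lt.1 (key x i j hi hj))
  have hInt : ∀ g : EuclideanSpace ℝ (Fin n) → ℝ, ContDiff ℝ 1 g → HasCompactSupport g →
      Integrable (fun x => ‖fderiv ℝ g x‖ ^ p) := by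
    intro g hg hgc
    refine Continuous.integrable_of_hasCompactSupport
      ((hg.continuous_fderiv one_ne_zero).norm.rpow_const fun _ => Or.inr hp0.le) ?_
    exact (hgc.fderiv ℝ).comp_left (g := fun v => ‖v‖ ^ p) (by simp [hp0.ne'])
  -- Scaling multiplies the energy by `(2 ^ j) ^ (n - p) ≤ 1`; this is where `p ≥ n` enters.
  have hfI : ∀ j, ∫ x, ‖fderiv ℝ (f j) x‖ ^ p ≤ C := by
    intro j
    have h2 : (1 : ℝ) ≤ 2 ^ j := one_le_pow₀ one_le_two
    have h20 : (0 : ℝ) < 2 ^ j := by positivity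
    have e : ∀ x, ‖fderiv ℝ (f j) x‖ ^ p
        = (((2 : ℝ) ^ j) ^ p)⁻¹ * ‖fderiv ℝ χ (((2 : ℝ) ^ j)⁻¹ • x)‖ ^ p := by
      intro x
      rw [hfd, norm_smul, mul_rpow (norm_nonneg _) (norm_nonneg _), norm_inv,
        Real.norm_of_nonneg h20.le, inv_rpow h20.le]
    simp_rw [e]
    rw [integral_const_mul,
      Measure.integral_comp_inv_smul_of_nonneg volume (fun x => ‖fderiv ℝ χ x‖ ^ p) h20.le,
      finrank_euclideanSpace_fin, smul_eq_mul, ← mul_assoc]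
    refine mul_le_of_le_one_left hC0 ?_
    rw [inv_mul_le_iff₀ (by positivity), mul_one, ← rpow_natCast (2 ^ j : ℝ) n]
    exact rpow_le_rpow_of_exponent_le h2 hp
  let η : EuclideanSpace ℝ (Fin n) → ℝ := fun x => (k : ℝ)⁻¹ * ∑ j ∈ Finset.range k, f (m + j) x
  have hη : ContDiff ℝ 1 η := contDiff_const.mul (ContDiff.sum fun j _ => hf _)
  have hηc : HasCompactSupport η := by
    refine HasCompactSupport.mul_left ?_
    refine HasCompactSupport.intro (isCompact_closedBall 0 (3 * 2 ^ (m + k))) fun x hx => ?_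
    refine Finset.sum_eq_zero fun j hj => ?_
    apply χ.zero_of_le_dist
    rw [dist_zero_right, hnorm, le_div_iff₀ (by positivity)]
    rw [mem_closedBall_zero_iff, not_le] at hx
    refine le_trans ?_ hx.le
    show 3 * (2 : ℝ) ^ (m + j) ≤ _
    have := Finset.mem_range.1 hj
    gcongr
    norm_num
  have hηd : ∀ x, ‖fderiv ℝ η x‖ ^ p
      ≤ ((k : ℝ) ^ p)⁻¹ * ∑ j ∈ Finset.range k, ‖fderiv ℝ (f (m + j)) x‖ ^ p := by
    intro x
    have hd : fderiv ℝ η x = (k : ℝ)⁻¹ • ∑ j ∈ Finset.range k, fderiv ℝ (f (m + j)) x := by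
      have h1 : HasFDerivAt (fun x => ∑ j ∈ Finset.range k, f (m + j) x)
          (∑ j ∈ Finset.range k, fderiv ℝ (f (m + j)) x) x :=
        HasFDerivAt.fun_sum fun j _ => ((hf (m + j)).differentiable one_ne_zero x).hasFDerivAt
      exact (h1.const_mul (k : ℝ)⁻¹).fderiv
    rw [hd, norm_smul, mul_rpow (norm_nonneg _) (norm_nonneg _), norm_inv,
      Real.norm_of_nonneg hk0.le, inv_rpow hk0.le]
    gcongr
    refine norm_sum_rpow_le _ _ hp0 fun i _ j _ hi hj => ?_
    have := hdisj x _ _ hi hj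
    omega
  refine ⟨η, hη, hηc, ?_, ?_, hInt η hη hηc, ?_⟩
  · intro x
    exact mul_nonneg (by positivity) (Finset.sum_nonneg fun j _ => χ.nonneg)
  · intro x hx
    have : ∀ j ∈ Finset.range k, f (m + j) x = 1 := by
      intro j _
      apply χ.one_of_mem_closedBall
      rw [mem_closedBall_zero_iff, hnorm, div_le_iff₀ (by positivity)]
      show _ ≤ 2 * (2 : ℝ) ^ (m + j)
      have h1 : (2 : ℝ) ^ m ≤ 2 ^ (m + j) := pow_le_pow_right₀ one_le_two (by omega)
      have h2 : (0 : ℝ) < 2 ^ (m + j) := by positivity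
      linarith
    show (k : ℝ)⁻¹ * ∑ j ∈ Finset.range k, f (m + j) x = 1
    rw [Finset.sum_congr rfl this]
    simp [hk0.ne']
  · have hsumInt : ∀ j ∈ Finset.range k, Integrable (fun x => ‖fderiv ℝ (f (m + j)) x‖ ^ p) :=
      fun j _ => hInt _ (hf _) (hfc _)
    calc ∫ x, ‖fderiv ℝ η x‖ ^ p
        ≤ ∫ x, ((k : ℝ) ^ p)⁻¹ * ∑ j ∈ Finset.range k, ‖fderiv ℝ (f (m + j)) x‖ ^ p :=
          integral_mono (hInt η hη hηc) ((integrable_finsetSum _ hsumInt).const_mul _) hηd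
      _ = ((k : ℝ) ^ p)⁻¹ * ∑ j ∈ Finset.range k, ∫ x, ‖fderiv ℝ (f (m + j)) x‖ ^ p := by
          rw [integral_const_mul, integral_finsetSum _ hsumInt]
      _ ≤ ((k : ℝ) ^ p)⁻¹ * ∑ j ∈ Finset.range k, C := by
          gcongr with j hj
          exact hfI _
      _ = (k * C) / (k : ℝ) ^ p := by simp; ring
      _ ≤ (k * C) / (k : ℝ) ^ (2 : ℝ) := by
          gcongr
          linarith
      _ = C / k := by rw [rpow_two]; field_simp
      _ ≤ ε := by
          rw [div_le_iff₀ hk0, mul_comm]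
          exact ((div_lt_iff₀ hε).1 hk).le

/-! ### The pointwise Caccioppoli estimate -/

/-- Young's inequality with a parameter, in a form that needs no sharp constants: it suffices to
distinguish whether `b ≤ τ * a`. -/
lemma rpow_sub_one_mul_le {a b τ p : ℝ} (ha : 0 ≤ a) (hb : 0 ≤ b) (hτ : 0 < τ) (hp : 1 ≤ p) :
    a ^ (p - 1) * b ≤ τ * a ^ p + τ ^ (1 - p) * b ^ p := by
  have e : ∀ c : ℝ, 0 ≤ c → c ^ (p - 1) * c = c ^ p := by
    intro c hc
    rw [← rpow_add_one' hc (by linarith), sub_add_cancel]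
  have h1 : 0 ≤ τ * a ^ p := by positivity
  have h2 : 0 ≤ τ ^ (1 - p) * b ^ p := by positivity
  rcases le_total b (τ * a) with h | h
  · have : a ^ (p - 1) * b ≤ a ^ (p - 1) * (τ * a) := by gcongr
    rw [mul_left_comm, e a ha] at this
    linarith
  · have h3 : a ≤ b / τ := by rwa [le_div_iff₀ hτ, mul_comm]
    have h4 : a ^ (p - 1) ≤ (b / τ) ^ (p - 1) := rpow_le_rpow ha h3 (by linarith)
    have h5 : (b / τ) ^ (p - 1) = τ ^ (1 - p) * b ^ (p - 1) := by
      rw [div_rpow hb hτ.le, ← neg_sub p 1, rpow_neg hτ.le, div_eq_inv_mul]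
    have : a ^ (p - 1) * b ≤ τ ^ (1 - p) * b ^ (p - 1) * b := by
      rw [← h5]; gcongr
    rw [mul_assoc, e b hb] at this
    linarith

/-- The pointwise energy estimate. Here `w = |∇u|`, `α = A |∇u|`, `e = η`, `d = |∇η|`,
`I = ⟨∇η, ∇u⟩` and `s = max (u - b) 0`; the first two terms on the right are the two parts of
`|∇u|^{p-2} A(|∇u|) ⟨∇u, ∇(η ^ p * s ^ 2)⟩`. Young's inequality is used with the parameter
`δ / (p * L)`, for which the absorbed term is exactly `δ * e ^ p * s * w ^ p`. -/
lemma energy_pointwise {p δ L α w e s S d I : ℝ} (hp : 2 ≤ p) (hδ : 0 < δ) (hδα : δ ≤ α)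
    (hαL : α ≤ L) (hw : 0 ≤ w) (he : 0 ≤ e) (hs : 0 ≤ s) (hsS : s ≤ S) (hd : 0 ≤ d)
    (hI : |I| ≤ d * w) :
    δ * (e ^ p * (s * w ^ p)) ≤
      (p * e ^ (p - 1) * s ^ 2 * (w ^ (p - 2) * α * I)
        + 2 * e ^ p * s * (w ^ (p - 2) * α * w ^ 2))
      + p * L * (δ / (p * L)) ^ (1 - p) * S ^ (p + 1) * d ^ p := by
  have hL : 0 < L := by linarith
  have hp0 : 0 < p := by linarith
  have hα : 0 < α := by linarith
  have hS : 0 ≤ S := hs.trans hsS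
  have e1 : w ^ (p - 2) * w ^ 2 = w ^ p := by
    rw [← rpow_two, ← rpow_add' hw (by simpa using hp0.ne')]
    simp
  have e2 : w ^ (p - 2) * w = w ^ (p - 1) := by
    rw [← rpow_add_one' hw (by linarith)]
    congr 1; ring
  have e3 : e ^ p * w ^ p = (e * w) ^ p := (mul_rpow he hw).symm
  have e4 : e ^ (p - 1) * w ^ (p - 1) = (e * w) ^ (p - 1) := (mul_rpow he hw).symm
  have h2 : 2 * δ * (s * (e * w) ^ p) ≤ 2 * e ^ p * s * (w ^ (p - 2) * α * w ^ 2) := by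
    have : 2 * e ^ p * s * (w ^ (p - 2) * α * w ^ 2) = 2 * α * (s * (e * w) ^ p) := by
      rw [← e3, ← e1]; ring
    rw [this]
    gcongr
  have h1 : -(p * L * s * ((e * w) ^ (p - 1) * (s * d)))
      ≤ p * e ^ (p - 1) * s ^ 2 * (w ^ (p - 2) * α * I) := by
    have a1 : -(d * w) ≤ I := (abs_le.1 hI).1
    have a2 : p * e ^ (p - 1) * s ^ 2 * (w ^ (p - 2) * α * (-(d * w)))
        ≤ p * e ^ (p - 1) * s ^ 2 * (w ^ (p - 2) * α * I) := by gcongr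
    have a3 : p * e ^ (p - 1) * s ^ 2 * (w ^ (p - 2) * α * (-(d * w)))
        = -(p * α * s * ((e * w) ^ (p - 1) * (s * d))) := by
      rw [← e4, ← e2]; ring
    have a4 : p * α * s * ((e * w) ^ (p - 1) * (s * d))
        ≤ p * L * s * ((e * w) ^ (p - 1) * (s * d)) := by gcongr
    linarith
  have h3 : p * L * s * ((e * w) ^ (p - 1) * (s * d))
      ≤ p * L * s * ((δ / (p * L)) * (e * w) ^ p + (δ / (p * L)) ^ (1 - p) * (s * d) ^ p) := by
    gcongr
    exact rpow_sub_one_mul_le (by positivity) (by positivity) (by positivity) (by linarith)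
  have h4 : p * L * s * ((δ / (p * L)) * (e * w) ^ p + (δ / (p * L)) ^ (1 - p) * (s * d) ^ p)
      = δ * (s * (e * w) ^ p)
        + p * L * (δ / (p * L)) ^ (1 - p) * s ^ (p + 1) * d ^ p := by
    rw [mul_rpow hs hd, rpow_add_one' hs (by linarith)]
    field_simp
  have h5 : p * L * (δ / (p * L)) ^ (1 - p) * s ^ (p + 1) * d ^ p
      ≤ p * L * (δ / (p * L)) ^ (1 - p) * S ^ (p + 1) * d ^ p := by
    gcongr
  have h6 : δ * (e ^ p * (s * w ^ p)) = δ * (s * (e * w) ^ p) := by rw [← e3]; ring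
  linarith

/-! ### Vanishing of the gradient on superlevel sets -/

lemma hasDerivAt_max_sq (t : ℝ) : HasDerivAt (fun t : ℝ => max t 0 ^ 2) (2 * max t 0) t := by
  rcases lt_trichotomy t 0 with h | h | h
  · rw [max_eq_right h.le, mul_zero]
    refine (hasDerivAt_const t (0 : ℝ)).congr_of_eventuallyEq ?_
    filter_upwards [eventually_lt_nhds h] with y hy
    simp [max_eq_right hy.le]
  · subst h
    rw [max_self, mul_zero, hasDerivAt_iff_isLittleO]
    have h2 : (fun t : ℝ => t ^ 2) =o[𝓝 0] (fun t : ℝ => t) := by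
      simpa using Asymptotics.isLittleO_pow_id (𝕜 := ℝ) (n := 2) (by norm_num)
    refine Asymptotics.IsBigO.trans_isLittleO ?_ (by simpa using h2)
    refine Asymptotics.IsBigO.of_bound 1 (Eventually.of_forall fun y => ?_)
    rcases le_total y 0 with hy | hy <;> simp [hy]
    positivity
  · rw [max_eq_left h.le]
    have := hasDerivAt_pow 2 t
    refine HasDerivAt.congr_of_eventuallyEq (by simpa using this) ?_
    filter_upwards [eventually_gt_nhds h] with y hy
    simp [max_eq_left hy.le]

lemma contDiff_max_sq : ContDiff ℝ 1 (fun t : ℝ => max t 0 ^ 2) := by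
  rw [contDiff_one_iff_deriv]
  refine ⟨fun t => (hasDerivAt_max_sq t).differentiableAt, ?_⟩
  have : deriv (fun t : ℝ => max t 0 ^ 2) = fun t => 2 * max t 0 :=
    funext fun t => (hasDerivAt_max_sq t).deriv
  rw [this]
  fun_prop

lemma inner_gradient {n : ℕ} (f : EuclideanSpace ℝ (Fin n) → ℝ) (x v : EuclideanSpace ℝ (Fin n)) :
    ⟪v, gradient f x⟫ = fderiv ℝ f x v := by
  rw [real_inner_comm, gradient, InnerProductSpace.toDual_symm_apply]

lemma norm_gradient {n : ℕ} (f : EuclideanSpace ℝ (Fin n) → ℝ) (x : EuclideanSpace ℝ (Fin n)) :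
    ‖gradient f x‖ = ‖fderiv ℝ f x‖ := by
  rw [gradient, LinearIsometryEquiv.norm_map]

/-- One-sided form of the result: if `u < b` on `P`, then `∇u` vanishes on `{u > b}`. Only the upper
level sets are tested, so it can be applied to both `u` and `-u`. -/
lemma gradient_eq_zero_of_gt {n : ℕ} (hn : 2 ≤ n) {p : ℝ} (hp : (n : ℝ) ≤ p)
    {A : ℝ → ℝ} (hA_cont : ContinuousOn A (Ici 0)) {L δ : ℝ} (hδ : 0 < δ)
    (hA_bound : ∀ t ≥ (0 : ℝ), δ ≤ A t ∧ A t ≤ L)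
    {P : Finset (EuclideanSpace ℝ (Fin n))} {u : EuclideanSpace ℝ (Fin n) → ℝ}
    (hu_cont : Continuous u)
    (hu_C1 : ContDiffOn ℝ 1 u ((↑P : Set (EuclideanSpace ℝ (Fin n)))ᶜ))
    {M : ℝ} (hM : ∀ x, |u x| ≤ M)
    (hu_weak : ∀ ψ : EuclideanSpace ℝ (Fin n) → ℝ,
      ContDiff ℝ (⊤ : ℕ∞) ψ → HasCompactSupport ψ →
      tsupport ψ ⊆ ((↑P : Set (EuclideanSpace ℝ (Fin n)))ᶜ) →
      ∫ x in ((↑P : Set (EuclideanSpace ℝ (Fin n)))ᶜ),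
        ‖gradient u x‖ ^ (p - 2) * A ‖gradient u x‖ *
          ⟪gradient u x, gradient ψ x⟫ = 0)
    {b : ℝ} (hb : ∀ x ∈ P, u x < b) {x₀ : EuclideanSpace ℝ (Fin n)} (hx₀ : b < u x₀) :
    gradient u x₀ = 0 := by
  have hn' : (2 : ℝ) ≤ n := by exact_mod_cast hn
  have hp2 : 2 ≤ p := hn'.trans hp
  have hp0 : 0 < p := by linarith
  set U : Set (EuclideanSpace ℝ (Fin n)) := (↑P : Set (EuclideanSpace ℝ (Fin n)))ᶜ with hUdef
  have hU : IsOpen U := P.finite_toSet.isClosed.isOpen_compl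
  have hbU : ∀ x, b ≤ u x → x ∈ U := fun x hx hxP => not_lt.2 hx (hb x hxP)
  have hL : 0 < L := hδ.trans_le ((hA_bound 0 le_rfl).1.trans (hA_bound 0 le_rfl).2)
  have hgc : ContinuousOn (gradient u) U :=
    (LinearIsometryEquiv.continuous _).comp_continuousOn
      (hu_C1.continuousOn_fderiv_of_isOpen hU le_rfl)
  have hwc : ContinuousOn (fun x => ‖gradient u x‖) U := hgc.norm
  let F : EuclideanSpace ℝ (Fin n) → EuclideanSpace ℝ (Fin n) :=
    fun x => (‖gradient u x‖ ^ (p - 2) * A ‖gradient u x‖) • gradient u x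
  have hF : ContinuousOn F U :=
    ((hwc.rpow_const fun _ _ => Or.inr (by linarith)).mul
      (hA_cont.comp hwc fun x _ => norm_nonneg _)).smul hgc
  have hweak : ∀ ψ : EuclideanSpace ℝ (Fin n) → ℝ, ContDiff ℝ 1 ψ → HasCompactSupport ψ →
      tsupport ψ ⊆ U → ∫ x in U, fderiv ℝ ψ x (F x) = 0 := by
    intro ψ h1 h2 h3
    refine weak_form_C1 hU hF (fun φ g1 g2 g3 => ?_) h1 h2 h3
    rw [← hu_weak φ g1 g2 g3]
    refine integral_congr_ae (ae_of_all _ fun x => ?_)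
    simp only [F, map_smul, smul_eq_mul, inner_gradient]
  let s : EuclideanSpace ℝ (Fin n) → ℝ := fun x => max (u x - b) 0
  have hs0 : ∀ x, 0 ≤ s x := fun x => le_max_right _ _
  have hsS : ∀ x, s x ≤ M + |b| := fun x => by
    have h1 := (abs_le.1 (hM x)).2
    have h2 := (abs_nonneg (u x)).trans (hM x)
    have h3 := neg_abs_le b
    have h4 := abs_nonneg b
    exact max_le (by linarith) (by linarith)
  have hsc : Continuous s := (hu_cont.sub continuous_const).max continuous_const
  have hsz : ∀ x, u x ≤ b → s x = 0 := fun x hx => max_eq_right (by linarith)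
  -- On `P`, where `u` need not be differentiable, `s` vanishes in a neighbourhood.
  have hs2 : ContDiff ℝ 1 (fun x => s x ^ 2) := by
    rw [contDiff_iff_contDiffAt]
    intro x
    by_cases hx : x ∈ U
    · exact contDiff_max_sq.contDiffAt.comp x
        ((hu_C1.contDiffAt (hU.mem_nhds hx)).sub contDiffAt_const)
    · have hlt : u x < b := not_le.1 fun h => hx (hbU x h)
      refine (contDiffAt_const (c := (0 : ℝ))).congr_of_eventuallyEq ?_
      filter_upwards [hu_cont.continuousAt.eventually_lt continuousAt_const hlt] with y hy
      simp [hsz y hy.le]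
  have hs2d : ∀ x ∈ U, HasFDerivAt (fun x => s x ^ 2) ((2 * s x) • fderiv ℝ u x) x := by
    intro x hx
    have h1 : HasFDerivAt u (fderiv ℝ u x) x :=
      ((hu_C1.contDiffAt (hU.mem_nhds hx)).differentiableAt one_ne_zero).hasFDerivAt
    exact (hasDerivAt_max_sq (u x - b)).comp_hasFDerivAt x (h1.sub_const b)
  set C := p * L * (δ / (p * L)) ^ (1 - p) * (M + |b|) ^ (p + 1) with hC
  have hMb : 0 ≤ M + |b| := (hs0 x₀).trans (hsS x₀)
  have hC0 : 0 ≤ C := by positivity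
  let g : EuclideanSpace ℝ (Fin n) → ℝ := fun x => s x * ‖gradient u x‖ ^ p
  have hg0 : ∀ x, 0 ≤ g x := fun x => mul_nonneg (hs0 x) (by positivity)
  have hgcont : ContinuousOn g U :=
    hsc.continuousOn.mul (hwc.rpow_const fun _ _ => Or.inr hp0.le)
  -- The Caccioppoli inequality, from the test function `η ^ p * s ^ 2`.
  have henergy : ∀ η : EuclideanSpace ℝ (Fin n) → ℝ, ContDiff ℝ 1 η → HasCompactSupport η →
      (∀ x, 0 ≤ η x) → Integrable (fun x => ‖fderiv ℝ η x‖ ^ p) →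
      IntegrableOn (fun x => η x ^ p * g x) U ∧
      δ * ∫ x in U, η x ^ p * g x ≤ C * ∫ x, ‖fderiv ℝ η x‖ ^ p := by
    intro η hη hηc hη0 hηI
    have hηp : ContDiff ℝ 1 (fun x => η x ^ p) :=
      hη.rpow_const_of_le (by simpa using (by linarith : (1 : ℝ) ≤ p))
    let ψ : EuclideanSpace ℝ (Fin n) → ℝ := fun x => η x ^ p * s x ^ 2
    have hψ : ContDiff ℝ 1 ψ := hηp.mul hs2
    set K := tsupport η ∩ {x | b ≤ u x} with hKdef
    have hKcl : IsClosed {x | b ≤ u x} := isClosed_le continuous_const hu_cont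
    have hK : IsCompact K := hηc.isCompact.inter_right hKcl
    have hKU : K ⊆ U := fun x hx => hbU x hx.2
    have hKz : ∀ x, x ∉ K → η x = 0 ∨ s x = 0 := by
      intro x hx
      by_cases h : x ∈ tsupport η
      · exact Or.inr (hsz x (not_le.1 fun h' => hx ⟨h, h'⟩).le)
      · exact Or.inl (image_eq_zero_of_notMem_tsupport h)
    have hψK : tsupport ψ ⊆ K := by
      refine closure_minimal (fun x hx => ?_) hK.isClosed
      by_contra hxK
      apply hx
      rcases hKz x hxK with h | h <;> simp [ψ, h, hp0.ne']
    have hψc : HasCompactSupport ψ :=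
      HasCompactSupport.of_support_subset_isCompact hK ((subset_tsupport _).trans hψK)
    have hI1 : IntegrableOn (fun x => η x ^ p * g x) U := by
      refine integrableOn_of_continuousOn_compact hK hU.measurableSet
        (hηp.continuous.continuousOn.mul (hgcont.mono hKU)) fun x _ hx => ?_
      rcases hKz x hx with h | h <;> simp [g, h, hp0.ne']
    have hI2 : IntegrableOn (fun x => fderiv ℝ ψ x (F x)) U := by
      refine integrableOn_of_continuousOn_compact hK hU.measurableSet
        ((hψ.continuous_fderiv one_ne_zero).continuousOn.clm_apply (hF.mono hKU)) ?_
      intro x _ hx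
      rw [fderiv_of_notMem_tsupport ℝ (fun h => hx (hψK h))]
      simp
    have hI3 : IntegrableOn (fun x => C * ‖fderiv ℝ η x‖ ^ p) U := (hηI.const_mul C).integrableOn
    refine ⟨hI1, ?_⟩
    have hpt : ∀ x ∈ U, δ * (η x ^ p * g x) ≤ fderiv ℝ ψ x (F x) + C * ‖fderiv ℝ η x‖ ^ p := by
      intro x hx
      have hd1 : HasFDerivAt (fun x => η x ^ p) ((p * η x ^ (p - 1)) • fderiv ℝ η x) x :=
        ((hη.differentiable one_ne_zero x).hasFDerivAt).rpow_const (Or.inr (by linarith))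
      have hd : fderiv ℝ ψ x (F x)
          = p * η x ^ (p - 1) * s x ^ 2 *
              (‖gradient u x‖ ^ (p - 2) * A ‖gradient u x‖ * fderiv ℝ η x (gradient u x))
            + 2 * η x ^ p * s x *
              (‖gradient u x‖ ^ (p - 2) * A ‖gradient u x‖ * ‖gradient u x‖ ^ 2) := by
        have hdψ : fderiv ℝ ψ x = _ := (hd1.mul (hs2d x hx)).fderiv
        rw [hdψ, ← real_inner_self_eq_norm_sq, inner_gradient]
        simp only [F, map_smul, smul_eq_mul, add_apply, FunLike.coe_smul, Pi.smul_apply]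
        ring
      rw [hd]
      have hA := hA_bound ‖gradient u x‖ (norm_nonneg _)
      exact energy_pointwise hp2 hδ hA.1 hA.2 (norm_nonneg _) (hη0 x) (hs0 x) (hsS x)
        (norm_nonneg _) ((fderiv ℝ η x).le_opNorm _)
    calc δ * ∫ x in U, η x ^ p * g x = ∫ x in U, δ * (η x ^ p * g x) :=
          (integral_const_mul _ _).symm
      _ ≤ ∫ x in U, (fderiv ℝ ψ x (F x) + C * ‖fderiv ℝ η x‖ ^ p) :=
          setIntegral_mono_on (hI1.const_mul δ) (hI2.add hI3) hU.measurableSet hpt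
      _ = C * ∫ x in U, ‖fderiv ℝ η x‖ ^ p := by
          rw [integral_add hI2 hI3, hweak ψ hψ hψc (hψK.trans hKU), zero_add, integral_const_mul]
      _ ≤ C * ∫ x, ‖fderiv ℝ η x‖ ^ p := by
          refine mul_le_mul_of_nonneg_left (setIntegral_le_integral hηI ?_) hC0
          exact ae_of_all _ fun x => rpow_nonneg (norm_nonneg _) _
  -- A positive value of `g` would bound `∫ η ^ p * g` below for all cutoffs `η` equal to `1` near
  -- `x₀`, which is incompatible with cutoffs of arbitrarily small energy.
  have hgx : g x₀ = 0 := by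
    by_contra hne
    have hpos : 0 < g x₀ := lt_of_le_of_ne (hg0 x₀) (Ne.symm hne)
    have hxU : x₀ ∈ U := hbU x₀ hx₀.le
    have hev : ∀ᶠ x in 𝓝 x₀, x ∈ U ∧ g x₀ / 2 < g x :=
      (hU.eventually_mem hxU).and
        ((hgcont.continuousAt (hU.mem_nhds hxU)).eventually_const_lt (by linarith))
    obtain ⟨r, hr, hball⟩ := Metric.eventually_nhds_iff_ball.1 hev
    set V := volume.real (Metric.ball x₀ r) with hV
    have hVpos : 0 < V := ENNReal.toReal_pos (Metric.measure_ball_pos _ _ hr).ne' measure_ball_lt_top.ne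
    obtain ⟨η, hη, hηc, hη0, hη1, hηI, hηε⟩ := exists_cutoff hn hp (‖x₀‖ + r)
      (ε := δ * (g x₀ / 2 * V) / (2 * (C + 1))) (by positivity)
    obtain ⟨hi, hle⟩ := henergy η hη hηc hη0 hηI
    have h1 : g x₀ / 2 * V ≤ ∫ x in U, η x ^ p * g x := by
      calc g x₀ / 2 * V = ∫ x in Metric.ball x₀ r, g x₀ / 2 := by
            rw [setIntegral_const, smul_eq_mul, mul_comm]
        _ ≤ ∫ x in Metric.ball x₀ r, η x ^ p * g x := by
            refine setIntegral_mono_on (integrableOn_const measure_ball_lt_top.ne)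
              (hi.mono_set fun x hx => (hball x hx).1) measurableSet_ball fun x hx => ?_
            have hx' : ‖x‖ ≤ ‖x₀‖ + r := by
              have h1 : ‖x - x₀‖ < r := by rwa [← dist_eq_norm]
              have h2 := norm_le_norm_add_norm_sub' x x₀
              linarith
            rw [hη1 x hx', one_rpow, one_mul]
            exact (hball x hx).2.le
        _ ≤ ∫ x in U, η x ^ p * g x := by
            refine setIntegral_mono_set hi (ae_of_all _ fun x => ?_)
              (LE.le.eventuallyLE fun x hx => (hball x hx).1)
            exact mul_nonneg (rpow_nonneg (hη0 x) _) (hg0 x)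
    have h2 : δ * (g x₀ / 2 * V) ≤ C * (δ * (g x₀ / 2 * V) / (2 * (C + 1))) :=
      (mul_le_mul_of_nonneg_left h1 hδ.le).trans
        (hle.trans (mul_le_mul_of_nonneg_left hηε hC0))
    have h3 : 0 < δ * (g x₀ / 2 * V) := by positivity
    rw [mul_div_assoc', le_div_iff₀ (by positivity)] at h2
    nlinarith
  have hs : s x₀ ≠ 0 := (lt_max_of_lt_left (by linarith : 0 < u x₀ - b)).ne'
  have := (mul_eq_zero.1 hgx).resolve_left hs
  exact norm_eq_zero.1 ((rpow_eq_zero (norm_nonneg _) hp0.ne').1 this)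

/-! ### The Liouville theorem -/

/-- corrected version of Serrin's Theorem 3: a bounded weak
solution of `div(|∇u|^{p-2} A(|∇u|) ∇u) = 0` in `ℝⁿ \ P` (`P` finite,
`p ≥ n`) which is continuous on `ℝⁿ`, `C¹` off `P`, and takes the same value
at all points of `P`, is constant. -/
theorem stmt_10 (n : ℕ) (hn : 2 ≤ n) (p : ℝ) (hp : (n : ℝ) ≤ p)
    (A : ℝ → ℝ) (hA_cont : ContinuousOn A (Ici 0)) (hA0 : 0 < A 0)
    (hφ_mono : StrictMonoOn (fun t => t ^ (p - 1) * A t) (Ioi 0))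
    (L δ : ℝ) (hδ : 0 < δ) (hδL : δ ≤ L)
    (hA_bound : ∀ t ≥ (0 : ℝ), δ ≤ A t ∧ A t ≤ L)
    (P : Finset (EuclideanSpace ℝ (Fin n))) (hP : P.Nonempty)
    (u : EuclideanSpace ℝ (Fin n) → ℝ)
    (hu_cont : Continuous u)
    (hu_C1 : ContDiffOn ℝ 1 u ((↑P : Set (EuclideanSpace ℝ (Fin n)))ᶜ))
    (hu_bdd : ∃ M, ∀ x, |u x| ≤ M)
    (hu_weak : ∀ ψ : EuclideanSpace ℝ (Fin n) → ℝ,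
      ContDiff ℝ (⊤ : ℕ∞) ψ → HasCompactSupport ψ →
      tsupport ψ ⊆ ((↑P : Set (EuclideanSpace ℝ (Fin n)))ᶜ) →
      ∫ x in ((↑P : Set (EuclideanSpace ℝ (Fin n)))ᶜ),
        ‖gradient u x‖ ^ (p - 2) * A ‖gradient u x‖ *
          ⟪gradient u x, gradient ψ x⟫ = 0)
    (hu_eq : ∀ xi ∈ P, ∀ xj ∈ P, u xi = u xj) :
    ∀ x y : EuclideanSpace ℝ (Fin n), u x = u y := by
  obtain ⟨M, hM⟩ := hu_bdd
  obtain ⟨z, hz⟩ := hP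
  have hneg : ∀ x, gradient (-u) x = -gradient u x := by
    intro x
    rw [gradient, gradient, fderiv_neg, map_neg]
  have hgrad : ∀ x, u x ≠ u z → gradient u x = 0 := by
    intro x hx
    rcases lt_or_gt_of_ne hx with h | h
    · obtain ⟨b, hb1, hb2⟩ := exists_between (neg_lt_neg h)
      have key := gradient_eq_zero_of_gt hn hp hA_cont hδ hA_bound (P := P) (u := -u) hu_cont.neg
        hu_C1.neg (M := M) (fun x => by simpa using hM x) ?_ (b := b) ?_ (x₀ := x) hb2
      · rwa [hneg, neg_eq_zero] at key
      · intro ψ h1 h2 h3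
        simp only [hneg, norm_neg, inner_neg_left, mul_neg, integral_neg, hu_weak ψ h1 h2 h3,
          neg_zero]
      · intro y hy
        rw [Pi.neg_apply, hu_eq y hy z hz]
        exact hb1
    · obtain ⟨b, hb1, hb2⟩ := exists_between h
      exact gradient_eq_zero_of_gt hn hp hA_cont hδ hA_bound hu_cont hu_C1 hM hu_weak
        (fun y hy => by rwa [hu_eq y hy z hz]) hb2
  have hopen : IsOpen {x | u x ≠ u z} := isOpen_ne_fun hu_cont continuous_const
  have hall : ∀ y, u y = u z := by
    intro y
    by_contra hy
    have hclopen : IsClopen {x | u x = u y} := by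
      refine ⟨isClosed_eq hu_cont continuous_const, Metric.isOpen_iff.2 fun x hx => ?_⟩
      have hxz : u x ≠ u z := by
        rw [show u x = u y from hx]
        exact hy
      obtain ⟨r, hr, hball⟩ := Metric.isOpen_iff.1 hopen x hxz
      refine ⟨r, hr, fun w hw => ?_⟩
      have hdiff : DifferentiableOn ℝ u (Metric.ball x r) := by
        refine (hu_C1.differentiableOn one_ne_zero).mono fun v hv hvP => ?_
        exact hball hv (hu_eq v hvP z hz)
      have hfd : EqOn (fderiv ℝ u) 0 (Metric.ball x r) := by
        intro v hv
        rw [Pi.zero_apply, ← norm_eq_zero, ← norm_gradient, hgrad v (hball hv), norm_zero]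
      have := Metric.isOpen_ball.is_const_of_fderiv_eq_zero
        (convex_ball x r).isPreconnected hdiff hfd hw (Metric.mem_ball_self hr)
      exact this.trans hx
    have huniv := hclopen.eq_univ ⟨y, rfl⟩
    have : z ∈ {x | u x = u y} := huniv ▸ mem_univ z
    exact hy this.symm
  intro x y
  rw [hall x, hall y]
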